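/- arXiv:1704.04671 — 5 statements merged into one kernel-verified Lean document; each statement's English description precedes it below -/
import Mathlib

section
/- Fix K ≥ 1 and 1 ≤ i < n. Let Inc_i denote the multiset {R(j,i) : 1 ≤ j ≤ i} of scores of incomplete windows ending at frame i. Then topK(K, Inc_{i+1}) = topK(K, {f^s(i+1)} + map (x ↦ x + f^m(i+1)) (topK(K, Inc_i))); that is, the K best incomplete-window scores ending at frame i+1 are obtained by adding f^m(i+1) to each of the K best incomplete-window scores ending at frame i, inserting the new value f^s(i+1), and keeping the K largest resulting values. (Lemma 1 of the paper.) -/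
/-- `topK K S` is the multiset of the `min(K, |S|)` largest elements of `S`:
sort `S` in ascending order and keep the last `min(K, |S|)` elements. -/
noncomputable def topK (K : ℕ) (S : Multiset ℝ) : Multiset ℝ :=
  ((S.sort (· ≤ ·)).drop (Multiset.card S - K) : List ℝ)

/-- Incomplete-window score: `R fs fm j i = f^s(j) + ∑_{q=j+1}^{i} f^m(q)`. -/
def R (fs fm : ℕ → ℝ) (j i : ℕ) : ℝ :=
  fs j + ∑ q ∈ Finset.Icc (j + 1) i, fm q

/-- `Inc fs fm i` is the multiset `{R(j,i) : 1 ≤ j ≤ i}` of scores of the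
incomplete windows ending at frame `i`. -/
def Inc (fs fm : ℕ → ℝ) (i : ℕ) : Multiset ℝ :=
  (Finset.Icc 1 i).val.map (fun j => R fs fm j i)

/-!
Extending the windows by one frame shifts every score by `fm (i + 1)` and adds the new window
with score `fs (i + 1)`. A shift is monotone, so it maps the `K` best scores to `K` best scores.
A score discarded at frame `i` has `K` scores at least as large ahead of it; these survive the
shift, so it cannot be needed among the `K` best at frame `i + 1`.
-/

theorem multiset_sort_add_eq_append {α : Type*} (r : α → α → Prop) [DecidableRel r] [IsTrans α r]
    [Std.Antisymm r] [Std.Total r] {S T : Multiset α} (h : ∀ a ∈ S, ∀ b ∈ T, r a b) :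
    (S + T).sort r = S.sort r ++ T.sort r := by
  refine List.Perm.eq_of_pairwise' (r := r) (Multiset.pairwise_sort _ _) ?_ ?_
  · exact List.pairwise_append.2 ⟨Multiset.pairwise_sort _ _, Multiset.pairwise_sort _ _,
      fun a ha b hb => h a ((Multiset.mem_sort r).1 ha) b ((Multiset.mem_sort r).1 hb)⟩
  · rw [← Multiset.coe_eq_coe, ← Multiset.coe_add]
    simp only [Multiset.sort_eq]

/-- `IsTopK K S T` says that `T` consists of `K` largest elements of `S` (of all of them if `S` has
fewer than `K`). This is the characterization of `topK K S` by its complement, here called `U`,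
stated without multiset subtraction so that no decidable equality is needed. -/
def IsTopK {α : Type*} [LE α] (K : ℕ) (S T : Multiset α) : Prop :=
  ∃ U, S = T + U ∧ T.card = min K S.card ∧ ∀ t ∈ T, ∀ u ∈ U, u ≤ t

namespace IsTopK

theorem map {α β : Type*} [Preorder α] [Preorder β] {K : ℕ} {S T : Multiset α} {f : α → β}
    (hf : Monotone f) (h : IsTopK K S T) : IsTopK K (S.map f) (T.map f) := by
  obtain ⟨U, rfl, hcard, hle⟩ := h
  refine ⟨U.map f, Multiset.map_add f T U, by simpa only [Multiset.card_map] using hcard, ?_⟩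
  simp only [Multiset.forall_mem_map_iff]
  exact fun t ht u hu => hf (hle t ht u hu)

variable {α : Type*} [LinearOrder α] {K : ℕ} {S T P W : Multiset α} {a : α}

theorem le_of_le_countP (h : IsTopK K S T) (ha : K ≤ S.countP (a ≤ ·)) : ∀ t ∈ T, a ≤ t := by
  obtain ⟨U, rfl, hcard, hle⟩ := h
  by_contra! ⟨t, ht, hta⟩
  have hU : U.countP (a ≤ ·) = 0 :=
    Multiset.countP_eq_zero.2 fun u hu => ((hle t ht u hu).trans_lt hta).not_ge
  have hT : T.countP (a ≤ ·) = T.card := by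
    refine le_antisymm (Multiset.countP_le_card _ _) ?_
    calc T.card ≤ K := hcard.trans_le (min_le_left _ _)
      _ ≤ (T + U).countP (a ≤ ·) := ha
      _ = T.countP (a ≤ ·) := by rw [Multiset.countP_add, hU, add_zero]
  exact hta.not_ge (Multiset.countP_eq_card.1 hT t ht)

theorem of_add_left (hP : IsTopK K T P) (hW : IsTopK K (S + P) W) : IsTopK K (S + T) W := by
  obtain ⟨U, rfl, hPcard, hUP⟩ := hP
  have hUW : ∀ w ∈ W, ∀ u ∈ U, u ≤ w := by
    intro w hw u hu
    have hPK : P.card = K := by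
      have : 0 < U.card := Multiset.card_pos_iff_exists_mem.2 ⟨u, hu⟩
      rw [Multiset.card_add] at hPcard
      omega
    refine hW.le_of_le_countP ?_ w hw
    calc K = P.countP (u ≤ ·) := by
          rw [Multiset.countP_eq_card.2 fun p hp => hUP p hp u hu, hPK]
      _ ≤ (S + P).countP (u ≤ ·) :=
          Multiset.countP_le_of_le _ (Multiset.le_add_left _ _)
  obtain ⟨V, hSP, hWcard, hVW⟩ := hW
  refine ⟨V + U, by rw [← add_assoc, hSP, add_assoc], ?_, fun w hw x hx => ?_⟩
  · simp only [Multiset.card_add] at hPcard hWcard ⊢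
    omega
  · exact (Multiset.mem_add.1 hx).elim (hVW w hw x) (hUW w hw x)

theorem topK_eq {K : ℕ} {S T : Multiset ℝ} (h : IsTopK K S T) : topK K S = T := by
  obtain ⟨U, rfl, hcard, hle⟩ := h
  have hsort : (T + U).sort (· ≤ ·) = U.sort (· ≤ ·) ++ T.sort (· ≤ ·) := by
    rw [add_comm, multiset_sort_add_eq_append _ fun u hu t ht => hle t ht u hu]
  have hdrop : (T + U).card - K = (U.sort (· ≤ ·)).length := by
    rw [Multiset.length_sort]
    rw [Multiset.card_add] at hcard ⊢
    omega
  rw [topK, hsort, hdrop, List.drop_left, Multiset.sort_eq]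

end IsTopK

theorem isTopK_topK (K : ℕ) (S : Multiset ℝ) : IsTopK K S (topK K S) := by
  set l := S.sort (· ≤ ·)
  set m := S.card - K
  refine ⟨(l.take m : List ℝ), ?_, ?_, fun t ht u hu => ?_⟩
  · rw [topK, add_comm, Multiset.coe_add, List.take_append_drop, Multiset.sort_eq]
  · rw [topK, Multiset.coe_card, List.length_drop, Multiset.length_sort]
    omega
  · have hl : (l.take m ++ l.drop m).Pairwise (· ≤ ·) := by
      rw [List.take_append_drop]
      exact Multiset.pairwise_sort S (· ≤ ·)
    exact (List.pairwise_append.1 hl).2.2 u hu t ht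

section Windows

variable (fs fm : ℕ → ℝ)

theorem R_self (i : ℕ) : R fs fm i i = fs i := by
  simp [R]

theorem R_succ {j i : ℕ} (hji : j ≤ i) : R fs fm j (i + 1) = R fs fm j i + fm (i + 1) := by
  rw [R, R, Finset.sum_Icc_succ_top (Nat.succ_le_succ hji), add_assoc]

theorem Inc_succ (i : ℕ) :
    Inc fs fm (i + 1) = fs (i + 1) ::ₘ (Inc fs fm i).map (fun x => x + fm (i + 1)) := by
  have hshift : ∀ j ∈ (Finset.Icc 1 i).val, R fs fm j (i + 1) = R fs fm j i + fm (i + 1) :=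
    fun _ hj => R_succ fs fm (Finset.mem_Icc.1 hj).2
  rw [Inc, ← Finset.insert_Icc_right_eq_Icc_add_one (Nat.le_add_left 1 i),
    Finset.insert_val_of_notMem (by simp), Multiset.map_cons, R_self,
    Multiset.map_congr rfl hshift, Inc, Multiset.map_map]
  rfl

end Windows

/-- Lemma 1: the K best incomplete-window scores ending at frame `i+1` are
obtained by adding `f^m(i+1)` to each of the K best incomplete-window scores
ending at frame `i`, inserting the new value `f^s(i+1)`, and keeping the K
largest resulting values. -/
theorem topK_inc_step (n K i : ℕ) (hK : 1 ≤ K) (hi : 1 ≤ i) (hin : i < n)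
    (fs fm : ℕ → ℝ) :
    topK K (Inc fs fm (i + 1)) =
      topK K (fs (i + 1) ::ₘ (topK K (Inc fs fm i)).map (fun x => x + fm (i + 1))) := by
  have hmono : Monotone fun x => x + fm (i + 1) := fun _ _ h => add_le_add_left h _
  have hshift := (isTopK_topK K (Inc fs fm i)).map hmono
  rw [Inc_succ, ← Multiset.singleton_add, ← Multiset.singleton_add]
  exact (hshift.of_add_left (isTopK_topK K _)).topK_eq
end

section
/- Fix K ≥ 1 and 1 ≤ i < n. Let Inc_i denote the multiset {R(j,i) : 1 ≤ j ≤ i} of incomplete-window scores ending at frame i, and let Win_i denote the multiset {F(s,e) : 1 ≤ s < e ≤ i} of structured scores of all temporal windows ending at or before frame i. Then topK(K, Win_{i+1}) = topK(K, topK(K, Win_i) + map (x ↦ x + f^e(i+1)) (topK(K, Inc_i))); that is, the K best window scores ending at or before frame i+1 are obtained by completing each of the K best incomplete windows ending at frame i with the end score f^e(i+1), merging with the previous K best complete window scores, and keeping the K largest values. (Lemma 2 of the paper.) -/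
/-- Structured score of the temporal window `(s, e)`:
`F(s,e) = f^s(s) + ∑_{t=s+1}^{e-1} f^m(t) + f^e(e)`. -/
def Fscore (fs fm fe : ℕ → ℝ) (s e : ℕ) : ℝ :=
  fs s + ∑ t ∈ Finset.Icc (s + 1) (e - 1), fm t + fe e

/-- `Win fs fm fe i` is the multiset `{F(s,e) : 1 ≤ s < e ≤ i}` of structured
scores of all temporal windows ending at or before frame `i`. -/
def Win (fs fm fe : ℕ → ℝ) (i : ℕ) : Multiset ℝ :=
  (((Finset.Icc 1 i) ×ˢ (Finset.Icc 1 i)).filter (fun p => p.1 < p.2)).val.map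
    (fun p => Fscore fs fm fe p.1 p.2)

/-!
A finite multiset in a partial order is determined by how many of its elements lie in each upper
set, that is, satisfy each monotone predicate, and the `K` largest elements of `S` have exactly
`min K c` elements in an upper set containing `c` elements of `S`. Hence both
`topK K (A + B) = topK K (topK K A + topK K B)` and the commutation of `topK K` with monotone maps
reduce to arithmetic of `min`. The windows ending at frame `i + 1` are the incomplete windows
ending at frame `i`, each completed by the end score of frame `i + 1`.
-/

section UpperSetCounts

variable {α : Type*}

theorem countP_le_eq_countP_lt_add_count [PartialOrder α] [DecidableEq α] [DecidableLE α]
    [DecidableLT α] (a : α) (S : Multiset α) :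
    S.countP (a ≤ ·) = S.countP (a < ·) + S.count a := by
  induction S using Multiset.induction_on with
  | empty => rfl
  | cons b S ih =>
    simp only [Multiset.countP_cons, Multiset.count_cons, ih]
    grind [le_iff_lt_or_eq]

theorem eq_of_countP_eq_of_monotone [PartialOrder α] {S T : Multiset α}
    (h : ∀ (p : α → Prop) [DecidablePred p], Monotone p → S.countP p = T.countP p) : S = T := by
  classical
  ext a
  have hle := h (a ≤ ·) monotone_le
  have hlt := h (a < ·) monotone_lt
  rw [countP_le_eq_countP_lt_add_count, countP_le_eq_countP_lt_add_count, hlt] at hle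
  exact Nat.add_left_cancel hle

theorem countP_rtake_of_sortedLE [Preorder α] {l : List α} (hl : l.SortedLE) {p : α → Prop}
    [DecidablePred p] (hp : Monotone p) (K : ℕ) :
    (l.rtake K).countP (p ·) = min K (l.countP (p ·)) := by
  set low := l.take (l.length - K)
  have split : low ++ l.rtake K = l := List.take_append_drop _ _
  have length_rtake : (l.rtake K).length = min K l.length := by
    rw [List.rtake, List.length_drop]; omega
  have countP_split : l.countP (p ·) = low.countP (p ·) + (l.rtake K).countP (p ·) := by
    rw [← List.countP_append, split]
  have low_le : ∀ a ∈ low, ∀ b ∈ l.rtake K, a ≤ b :=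
    (List.pairwise_append.1 (split.symm ▸ hl.pairwise)).2.2
  by_cases h : ∃ a ∈ low, p a
  · obtain ⟨a, ha, hpa⟩ := h
    have all_rtake : (l.rtake K).countP (p ·) = (l.rtake K).length :=
      List.countP_eq_length.2 fun b hb => decide_eq_true (hp (low_le a ha b hb) hpa)
    have rtake_full : (l.rtake K).length = K := by
      have low_pos : 0 < low.length := List.length_pos_of_mem ha
      rw [List.length_take] at low_pos
      omega
    omega
  · have none_low : low.countP (p ·) = 0 :=
      List.countP_eq_zero.2 fun a ha hpa => h ⟨a, ha, of_decide_eq_true hpa⟩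
    have le_length : (l.rtake K).countP (p ·) ≤ (l.rtake K).length := List.countP_le_length
    omega

end UpperSetCounts

theorem countP_topK {p : ℝ → Prop} [DecidablePred p] (hp : Monotone p) (K : ℕ) (S : Multiset ℝ) :
    (topK K S).countP p = min K (S.countP p) := by
  have topK_eq : topK K S = ((S.sort (· ≤ ·)).rtake K : List ℝ) := by
    rw [topK, List.rtake, Multiset.length_sort]
  rw [topK_eq, Multiset.coe_countP,
    countP_rtake_of_sortedLE (Multiset.pairwise_sort S (· ≤ ·)).sortedLE hp,
    ← Multiset.coe_countP, Multiset.sort_eq]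

theorem topK_add (K : ℕ) (A B : Multiset ℝ) :
    topK K (A + B) = topK K (topK K A + topK K B) := by
  refine eq_of_countP_eq_of_monotone fun p _ hp => ?_
  simp only [countP_topK hp, Multiset.countP_add]
  omega

theorem topK_map_of_monotone {f : ℝ → ℝ} (hf : Monotone f) (K : ℕ) (S : Multiset ℝ) :
    topK K (S.map f) = (topK K S).map f := by
  refine eq_of_countP_eq_of_monotone fun p _ hp => ?_
  simp only [countP_topK hp, Multiset.countP_map, ← Multiset.countP_eq_card_filter]
  exact (countP_topK (hp.comp hf) K S).symm

theorem filter_lt_product_insert_val {α : Type*} [Preorder α] [DecidableEq α] [DecidableLT α]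
    {s : Finset α} {b : α} (hb : ∀ a ∈ s, a < b) :
    ({p ∈ insert b s ×ˢ insert b s | p.1 < p.2} : Finset (α × α)).val =
      ({p ∈ s ×ˢ s | p.1 < p.2} : Finset (α × α)).val + s.val.map (·, b) := by
  have eq_union : ({p ∈ insert b s ×ˢ insert b s | p.1 < p.2} : Finset (α × α)) =
      {p ∈ s ×ˢ s | p.1 < p.2} ∪ s.map (Function.Embedding.sectL α b) := by
    ext ⟨x, y⟩
    simp only [Finset.mem_filter, Finset.mem_product, Finset.mem_insert, Finset.mem_union,
      Finset.mem_map, Function.Embedding.sectL_apply, Prod.mk.injEq]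
    grind [lt_asymm]
  have disj : Disjoint ({p ∈ s ×ˢ s | p.1 < p.2} : Finset (α × α))
      (s.map (Function.Embedding.sectL α b)) := by
    rw [Finset.disjoint_left]
    grind [Function.Embedding.sectL_apply]
  rw [eq_union, ← Finset.disjUnion_eq_union _ _ disj, Finset.disjUnion_val, Finset.map_val]
  rfl

theorem Fscore_succ (fs fm fe : ℕ → ℝ) (j i : ℕ) :
    Fscore fs fm fe j (i + 1) = R fs fm j i + fe (i + 1) := rfl

theorem Win_succ (fs fm fe : ℕ → ℝ) (i : ℕ) :
    Win fs fm fe (i + 1) = Win fs fm fe i + (Inc fs fm i).map (· + fe (i + 1)) := by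
  have lt_succ : ∀ j ∈ Finset.Icc 1 i, j < i + 1 := by grind
  rw [Win, ← Finset.insert_Icc_right_eq_Icc_add_one (Nat.le_add_left 1 i),
    filter_lt_product_insert_val lt_succ, Multiset.map_add, Multiset.map_map, Win, Inc,
    Multiset.map_map]
  simp only [Function.comp_def, Fscore_succ]

/-- Lemma 2: the K best window scores ending at or before frame `i+1` are
obtained by completing each of the K best incomplete windows ending at frame
`i` with the end score `f^e(i+1)`, merging with the previous K best complete
window scores, and keeping the K largest values. -/
theorem topK_win_step (n K i : ℕ) (hK : 1 ≤ K) (hi : 1 ≤ i) (hin : i < n)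
    (fs fm fe : ℕ → ℝ) :
    topK K (Win fs fm fe (i + 1)) =
      topK K (topK K (Win fs fm fe i) +
        (topK K (Inc fs fm i)).map (fun x => x + fe (i + 1))) := by
  rw [Win_succ, topK_add, topK_map_of_monotone add_left_mono]
end

section
/- For every K ∈ ℕ, every finite multiset S of reals, and every real a: topK(K, {a} + S) = topK(K, {a} + topK(K, S)); that is, the K largest elements of S together with a newly inserted element a can be computed from only the K largest elements of S together with a. -/
/-!
An element with at least `K` other elements above it can be deleted without changing the `K`
largest elements, since these are then found among the elements above it. Everything that
`topK K S` discards from `S` lies below the `K` elements it retains, and these remain present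
whatever is added to `S`.
-/

section kLargest

variable {α : Type*} [LinearOrder α]

theorem sort_add_of_forall_le {R T : Multiset α} (h : ∀ x ∈ R, ∀ y ∈ T, x ≤ y) :
    (R + T).sort (· ≤ ·) = R.sort (· ≤ ·) ++ T.sort (· ≤ ·) := by
  have sorted : (R.sort (· ≤ ·) ++ T.sort (· ≤ ·)).Pairwise (· ≤ ·) :=
    List.pairwise_append.mpr ⟨R.pairwise_sort _, T.pairwise_sort _, by simpa using h⟩
  refine List.Perm.eq_of_pairwise' ((R + T).pairwise_sort _) sorted ?_
  rw [← Multiset.coe_eq_coe, ← Multiset.coe_add]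
  simp only [Multiset.sort_eq]

/-- The `min(K, |S|)` largest elements of `S`, with multiplicity: `topK` over an arbitrary linear
order, encoded in the same way, so that `topK` is by definition the case of the reals. -/
def kLargest (K : ℕ) (S : Multiset α) : Multiset α :=
  ((S.sort (· ≤ ·)).drop (Multiset.card S - K) : List α)

theorem card_kLargest (K : ℕ) (S : Multiset α) :
    Multiset.card (kLargest K S) = min K (Multiset.card S) := by
  rw [kLargest, Multiset.coe_card, List.length_drop, Multiset.length_sort]
  omega

theorem exists_add_kLargest_eq (K : ℕ) (S : Multiset α) :
    ∃ R, R + kLargest K S = S ∧ ∀ x ∈ R, ∀ y ∈ kLargest K S, x ≤ y := by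
  set n := Multiset.card S - K
  have take_append_drop :
      (S.sort (· ≤ ·)).take n ++ (S.sort (· ≤ ·)).drop n = S.sort (· ≤ ·) :=
    List.take_append_drop n _
  refine ⟨((S.sort (· ≤ ·)).take n : List α), ?_, ?_⟩
  · rw [kLargest, Multiset.coe_add, take_append_drop, Multiset.sort_eq]
  · have sorted := S.pairwise_sort (· ≤ ·)
    rw [← take_append_drop] at sorted
    exact (List.pairwise_append.mp sorted).2.2

theorem kLargest_add_of_forall_le {K : ℕ} {R T : Multiset α} (h : ∀ x ∈ R, ∀ y ∈ T, x ≤ y)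
    (hK : K ≤ Multiset.card T) : kLargest K (R + T) = kLargest K T := by
  have card_sub : Multiset.card (R + T) - K =
      (R.sort (· ≤ ·)).length + (Multiset.card T - K) := by
    rw [Multiset.card_add, Multiset.length_sort, Nat.add_sub_assoc hK]
  rw [kLargest, kLargest, sort_add_of_forall_le h, card_sub, List.drop_length_add_append]

theorem kLargest_cons_of_le_card_filter {K : ℕ} {x : α} {U : Multiset α}
    (hK : K ≤ Multiset.card (U.filter (x ≤ ·))) : kLargest K (x ::ₘ U) = kLargest K U := by
  set above := U.filter (x ≤ ·)
  set below := U.filter (¬ x ≤ ·)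
  have below_add_above : below + above = U := by rw [add_comm, Multiset.filter_add_not]
  have below_le : ∀ y ∈ below, ∀ z ∈ above, y ≤ z := fun y hy z hz =>
    (le_of_not_ge (Multiset.mem_filter.mp hy).2).trans (Multiset.mem_filter.mp hz).2
  have cons_below_le : ∀ y ∈ x ::ₘ below, ∀ z ∈ above, y ≤ z :=
    Multiset.forall_mem_cons.mpr ⟨fun _ hz => (Multiset.mem_filter.mp hz).2, below_le⟩
  calc kLargest K (x ::ₘ U)
      = kLargest K (x ::ₘ below + above) := by rw [Multiset.cons_add, below_add_above]
    _ = kLargest K above := kLargest_add_of_forall_le cons_below_le hK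
    _ = kLargest K (below + above) := (kLargest_add_of_forall_le below_le hK).symm
    _ = kLargest K U := by rw [below_add_above]

theorem kLargest_add_of_forall_le_card_filter {K : ℕ} {R U : Multiset α}
    (hK : ∀ x ∈ R, K ≤ Multiset.card (U.filter (x ≤ ·))) :
    kLargest K (R + U) = kLargest K U := by
  induction R using Multiset.induction_on with
  | empty => rw [zero_add]
  | cons x R ih =>
    obtain ⟨hx, hR⟩ := Multiset.forall_mem_cons.mp hK
    have hx_add : K ≤ Multiset.card ((R + U).filter (x ≤ ·)) :=
      hx.trans (Multiset.card_le_card (Multiset.filter_le_filter _ (Multiset.le_add_left U R)))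
    rw [Multiset.cons_add, kLargest_cons_of_le_card_filter hx_add, ih hR]

theorem topK_cons_general (K : ℕ) (T S : Multiset α) :
    kLargest K (T + S) = kLargest K (T + kLargest K S) := by
  obtain ⟨R, hS, hle⟩ := exists_add_kLargest_eq K S
  have card_of_mem : ∀ x ∈ R, Multiset.card (kLargest K S) = K := fun x hx => by
    have card_pos : 0 < Multiset.card R := Multiset.card_pos_iff_exists_mem.mpr ⟨x, hx⟩
    have card_add := congrArg Multiset.card hS
    rw [Multiset.card_add, card_kLargest] at card_add
    rw [card_kLargest]
    omega
  have discardable : ∀ x ∈ R, K ≤ Multiset.card ((T + kLargest K S).filter (x ≤ ·)) :=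
    fun x hx => by
      rw [Multiset.filter_add, Multiset.card_add, Multiset.filter_eq_self.mpr (hle x hx),
        card_of_mem x hx]
      exact Nat.le_add_left K _
  calc kLargest K (T + S)
      = kLargest K (R + (T + kLargest K S)) := by rw [add_left_comm, hS]
    _ = kLargest K (T + kLargest K S) := kLargest_add_of_forall_le_card_filter discardable

end kLargest

/-- The K largest elements of `S` with a newly inserted element `a` can be
computed from only the K largest elements of `S` together with `a`. -/
theorem topK_cons (K : ℕ) (S : Multiset ℝ) (a : ℝ) :
    topK K (a ::ₘ S) = topK K (a ::ₘ topK K S) := by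
  rw [← Multiset.singleton_add, ← Multiset.singleton_add]
  exact topK_cons_general K {a} S
end

section
/- Define R̂ : {1,…,n} → ℝ recursively by R̂(1) = f^s(1) and R̂(i+1) = max(f^s(i+1), R̂(i) + f^m(i+1)) for 1 ≤ i < n. Then for every 1 ≤ i ≤ n, R̂(i) = max over 1 ≤ j ≤ i of R(j,i), i.e., R̂(i) equals the maximum incomplete-window score ending at frame i. (The K = 1 invariant of the Structured Maximal Sums algorithm.) -/
section IntervalSup

open Finset

theorem finset_sup'_Icc_add_one {α : Type*} [SemilatticeSup α] {m i : ℕ} (h : m ≤ i) (f : ℕ → α) :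
    (Icc m (i + 1)).sup' (nonempty_Icc.mpr (Nat.le_succ_of_le h)) f =
      f (i + 1) ⊔ (Icc m i).sup' (nonempty_Icc.mpr h) f := by
  simp only [← insert_Icc_right_eq_Icc_add_one (Nat.le_succ_of_le h),
    sup'_insert (H := nonempty_Icc.mpr h)]

theorem finset_sup'_add_right {ι M : Type*} [Add M] [LinearOrder M] [AddRightMono M]
    {s : Finset ι} (hs : s.Nonempty) (f : ι → M) (a : M) :
    s.sup' hs (fun j => f j + a) = s.sup' hs f + a :=
  (apply_sup'_eq_sup'_comp hs (· + a) fun x y => max_add x y a).symm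

end IntervalSup

section WindowScore

variable {M : Type*} [AddCommMonoid M]

/-- The incomplete-window score `R` with values in an arbitrary additive commutative monoid.
At `M = ℝ` it unfolds to the same expression as `R`. -/
def windowScore (fs fm : ℕ → M) (j i : ℕ) : M :=
  fs j + ∑ q ∈ Finset.Icc (j + 1) i, fm q

theorem windowScore_self (fs fm : ℕ → M) (i : ℕ) : windowScore fs fm i i = fs i := by
  simp [windowScore]

theorem windowScore_add_one (fs fm : ℕ → M) {j i : ℕ} (h : j ≤ i) :
    windowScore fs fm j (i + 1) = windowScore fs fm j i + fm (i + 1) := by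
  rw [windowScore, windowScore, Finset.sum_Icc_succ_top (Nat.succ_le_succ h), add_assoc]

variable [LinearOrder M] [IsOrderedAddMonoid M]

/-- A window ending at `i + 1` either starts there or extends a window ending at `i`, and all
extensions add the same `fm (i + 1)`. -/
theorem sup'_windowScore_add_one (fs fm : ℕ → M) {m i : ℕ} (h : m ≤ i) :
    (Finset.Icc m (i + 1)).sup' (Finset.nonempty_Icc.mpr (Nat.le_succ_of_le h))
        (fun j => windowScore fs fm j (i + 1)) =
      max (fs (i + 1))
        ((Finset.Icc m i).sup' (Finset.nonempty_Icc.mpr h) (fun j => windowScore fs fm j i) +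
          fm (i + 1)) := by
  have extend : ∀ j ∈ Finset.Icc m i,
      windowScore fs fm j (i + 1) = windowScore fs fm j i + fm (i + 1) :=
    fun j hj => windowScore_add_one fs fm (Finset.mem_Icc.mp hj).2
  rw [finset_sup'_Icc_add_one h, windowScore_self, Finset.sup'_congr _ rfl extend,
    finset_sup'_add_right]

theorem rhat_eq_max_incomplete_general {m n : ℕ} {fs fm Rhat : ℕ → M} (hstart : Rhat m = fs m)
    (hstep : ∀ i, m ≤ i → i < n → Rhat (i + 1) = max (fs (i + 1)) (Rhat i + fm (i + 1))) :
    ∀ i, ∀ hi : m ≤ i, i ≤ n →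
      Rhat i = (Finset.Icc m i).sup' (Finset.nonempty_Icc.mpr hi)
        (fun j => windowScore fs fm j i) := by
  intro i hi
  induction i, hi using Nat.le_induction with
  | base => simp [hstart, windowScore_self]
  | succ i hi ih =>
    intro hin
    rw [hstep i hi hin, ih (Nat.le_of_succ_le hin), sup'_windowScore_add_one fs fm hi]

end WindowScore

/-- The K = 1 invariant of the Structured Maximal Sums algorithm: the
recursively defined `R̂` with `R̂(1) = f^s(1)` and
`R̂(i+1) = max(f^s(i+1), R̂(i) + f^m(i+1))` equals, at each `1 ≤ i ≤ n`, the
maximum incomplete-window score `max_{1 ≤ j ≤ i} R(j,i)`. -/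
theorem rhat_eq_max_incomplete (n : ℕ) (hn : 1 ≤ n) (fs fm : ℕ → ℝ)
    (Rhat : ℕ → ℝ) (h1 : Rhat 1 = fs 1)
    (hstep : ∀ i, 1 ≤ i → i < n →
      Rhat (i + 1) = max (fs (i + 1)) (Rhat i + fm (i + 1))) :
    ∀ i, ∀ hi : 1 ≤ i, i ≤ n →
      Rhat i = (Finset.Icc 1 i).sup' (Finset.nonempty_Icc.mpr hi)
        (fun j => R fs fm j i) :=
  rhat_eq_max_incomplete_general h1 hstep
end

section
/- Let y_gt ⊆ {1,…,n} be the set of frames of a fixed ground-truth window. For p ∈ {s, m, e}, define modified framewise scores f̃^p(t) = f^p(t) + 1 if t ∉ y_gt and f̃^p(t) = f^p(t) − 1 if t ∈ y_gt, and let F̃(s,e) be the structured score computed from f̃^s, f̃^m, f̃^e. Then for every temporal window y = (s, e), writing y also for its frame set {s, s+1, …, e}: Δ(y_gt, y) + F(s,e) = |y_gt| + F̃(s,e). That is, the loss-augmented confidence equals a constant plus the structured score under the modified framewise scores. -/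
/-- Overlap penalty between two windows viewed as sets of frames:
`Δ(y, ȳ) = |y ∪ ȳ| − |y ∩ ȳ|`. -/
def delta (y ybar : Finset ℕ) : ℝ :=
  ((y ∪ ybar).card : ℝ) - ((y ∩ ybar).card : ℝ)

/-- Modified framewise score: `f̃(t) = f(t) − 1` if `t` is in the ground-truth
window and `f̃(t) = f(t) + 1` otherwise. -/
def modifyScore (ygt : Finset ℕ) (f : ℕ → ℝ) : ℕ → ℝ :=
  fun t => if t ∈ ygt then f t - 1 else f t + 1

/-- The amount `±1` by which the loss shifts the score of frame `t`: each frame of a predicted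
window raises the overlap penalty by one outside the ground truth `ygt` and lowers it by one
inside. -/
def lossShift {α : Type*} [DecidableEq α] (ygt : Finset α) (t : α) : ℝ :=
  if t ∈ ygt then -1 else 1

theorem sum_lossShift_eq_card_sub_card {α : Type*} [DecidableEq α] (ygt y : Finset α) :
    ∑ t ∈ y, lossShift ygt t = ((y \ ygt).card : ℝ) - ((ygt ∩ y).card : ℝ) := by
  simp only [lossShift, Finset.sum_ite, Finset.sum_const, nsmul_eq_mul,
    Finset.filter_mem_eq_inter, Finset.filter_notMem_eq_sdiff, Finset.inter_comm y ygt]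
  ring

theorem delta_eq_card_add_sum_lossShift (ygt y : Finset ℕ) :
    delta ygt y = (ygt.card : ℝ) + ∑ t ∈ y, lossShift ygt t := by
  have card_union : ((ygt ∪ y).card : ℝ) = (y \ ygt).card + ygt.card := by
    rw [Finset.union_comm, ← Finset.card_sdiff_add_card, Nat.cast_add]
  rw [delta, sum_lossShift_eq_card_sub_card, card_union]
  ring

theorem modifyScore_eq_add_lossShift (ygt : Finset ℕ) (f : ℕ → ℝ) :
    modifyScore ygt f = f + lossShift ygt := by
  ext t
  by_cases ht : t ∈ ygt <;> simp [modifyScore, lossShift, ht, sub_eq_add_neg]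

theorem Fscore_add (fs fm fe gs gm ge : ℕ → ℝ) (s e : ℕ) :
    Fscore (fs + gs) (fm + gm) (fe + ge) s e = Fscore fs fm fe s e + Fscore gs gm ge s e := by
  simp only [Fscore, Pi.add_apply, Finset.sum_add_distrib]
  ring

theorem Fscore_self_eq_sum_Icc (g : ℕ → ℝ) {s e : ℕ} (hse : s < e) :
    Fscore g g g s e = ∑ t ∈ Finset.Icc s e, g t := by
  rw [Fscore, Finset.Icc_add_one_sub_one_eq_Ioo, add_assoc, Finset.sum_Ioo_add_eq_sum_Ioc hse,
    Finset.add_sum_Ioc_eq_sum_Icc hse.le]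

/-- For every temporal window `(s, e)` the loss-augmented confidence
`Δ(y_gt, y) + F(s,e)` equals the constant `|y_gt|` plus the structured score
computed from the modified framewise scores. -/
theorem loss_augmented_eq_modified (n : ℕ) (fs fm fe : ℕ → ℝ)
    (ygt : Finset ℕ) (hgt : ygt ⊆ Finset.Icc 1 n)
    (s e : ℕ) (hs : 1 ≤ s) (hse : s < e) (he : e ≤ n) :
    delta ygt (Finset.Icc s e) + Fscore fs fm fe s e =
      (ygt.card : ℝ) +
        Fscore (modifyScore ygt fs) (modifyScore ygt fm) (modifyScore ygt fe) s e := by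
  calc delta ygt (Finset.Icc s e) + Fscore fs fm fe s e
      = ygt.card + (Fscore fs fm fe s e + ∑ t ∈ Finset.Icc s e, lossShift ygt t) := by
        rw [delta_eq_card_add_sum_lossShift]
        ring
    _ = ygt.card + Fscore (fs + lossShift ygt) (fm + lossShift ygt) (fe + lossShift ygt) s e := by
        rw [Fscore_add, Fscore_self_eq_sum_Icc _ hse]
    _ = ygt.card +
          Fscore (modifyScore ygt fs) (modifyScore ygt fm) (modifyScore ygt fe) s e := by
        simp only [modifyScore_eq_add_lossShift]
end
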